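/- arXiv:0903.4428 — 8 statements merged into one kernel-verified Lean document; each statement's English description precedes it below -/
import Mathlib

section
/- Let a_i, b_i, c_i ∈ ℂ∖{0} and d_i ∈ ℂ (i = 1,2,3). The linear cube system is compatible (consistent on the cube) if and only if the coefficients satisfy conditions (abc) and conditions (hom). -/
/-- Compatibility of the linear cube system is equivalent to conditions (abc) and (hom). -/
theorem linear_cube_compatible_iff
    (a₁ a₂ a₃ b₁ b₂ b₃ c₁ c₂ c₃ d₁ d₂ d₃ : ℂ)
    (ha₁ : a₁ ≠ 0) (ha₂ : a₂ ≠ 0) (ha₃ : a₃ ≠ 0)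
    (hb₁ : b₁ ≠ 0) (hb₂ : b₂ ≠ 0) (hb₃ : b₃ ≠ 0)
    (hc₁ : c₁ ≠ 0) (hc₂ : c₂ ≠ 0) (hc₃ : c₃ ≠ 0) :
    (∀ u ut uh ub : ℂ,
      (d₁ - a₁*ub - b₁*(d₃ - a₃*u - b₃*ub - c₃*ut) - c₁*(d₂ - a₂*u - b₂*uh - c₂*ub)
        = d₂ - a₂*ut - b₂*(d₁ - a₁*u - b₁*ut - c₁*uh) - c₂*(d₃ - a₃*u - b₃*ub - c₃*ut)) ∧
      (d₂ - a₂*ut - b₂*(d₁ - a₁*u - b₁*ut - c₁*uh) - c₂*(d₃ - a₃*u - b₃*ub - c₃*ut)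
        = d₃ - a₃*uh - b₃*(d₂ - a₂*u - b₂*uh - c₂*ub) - c₃*(d₁ - a₁*u - b₁*ut - c₁*uh)))
    ↔ ((b₁*b₃ - b₃*c₂ + c₂*c₁ = a₁ ∧
        b₂*b₁ - b₁*c₃ + c₃*c₂ = a₂ ∧
        b₃*b₂ - b₂*c₁ + c₁*c₃ = a₃) ∧
       ((b₂ - c₃)*d₁ - (1 + b₃)*d₂ + (1 + c₂)*d₃ = 0 ∧
        (1 + c₃)*d₁ + (b₃ - c₁)*d₂ - (1 + b₁)*d₃ = 0 ∧
        -(1 + b₂)*d₁ + (1 + c₁)*d₂ + (b₁ - c₂)*d₃ = 0)) := by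
  constructor
  · intro h
    obtain ⟨p0, q0⟩ := h 0 0 0 0
    obtain ⟨pt, qt⟩ := h 0 1 0 0
    obtain ⟨ph, qh⟩ := h 0 0 1 0
    obtain ⟨pb, qb⟩ := h 0 0 0 1
    refine ⟨⟨?_, ?_, ?_⟩, ?_, ?_, ?_⟩
    · linear_combination pb - p0
    · linear_combination p0 - pt
    · linear_combination q0 - qh
    · linear_combination -q0
    · linear_combination p0 + q0
    · linear_combination -p0
  · rintro ⟨⟨rfl, rfl, rfl⟩, h1, h2, h3⟩ u ut uh ub
    constructor
    · linear_combination -h3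
    · linear_combination -h1
end

section
/- Let b_i, c_i ∈ ℂ (i = 1,2,3) and define a_1 := b1·b3 − b3·c2 + c2·c1, a_2 := b2·b1 − b1·c3 + c3·c2, a_3 := b3·b2 − b2·c1 + c1·c3. Then rank(M) ≤ 1 if and only if a_i + b_i + c_i + 1 = 0 for all i ∈ {1,2,3}. (Equivalently: all nine 2×2 cofactors of M vanish if and only if a_i + b_i + c_i + 1 = 0 for i = 1,2,3.) -/
theorem rank_le_one_iff_minors (M : Matrix (Fin 3) (Fin 3) ℂ) :
    M.rank ≤ 1 ↔ ∀ i k j l, M i j * M k l = M i l * M k j := by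
  constructor
  · intro h i k j l
    by_contra hne
    have h1 := Matrix.rank_submatrix_le M ![i, k] ![j, l]
    have hu : IsUnit (M.submatrix ![i, k] ![j, l]) := by
      rw [Matrix.isUnit_iff_isUnit_det, isUnit_iff_ne_zero, Matrix.det_fin_two]
      simpa [sub_eq_zero] using hne
    have h2 := Matrix.rank_of_isUnit _ hu
    rw [Fintype.card_fin] at h2
    omega
  · intro h
    by_cases h0 : M = 0
    · simp [h0]
    · have : ∃ i j, M i j ≠ 0 := by
        by_contra! hc
        exact h0 (Matrix.ext hc)
      obtain ⟨i, j, hij⟩ := this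
      have e : M = Matrix.vecMulVec (fun k => M k j) (fun l => M i l / M i j) := by
        ext k l
        rw [Matrix.vecMulVec_apply]
        field_simp
        linear_combination h i k j l
      rw [e]
      exact Matrix.rank_vecMulVec_le _ _

/-- With a₁, a₂, a₃ defined by conditions (abc), rank M ≤ 1 iff aᵢ + bᵢ + cᵢ + 1 = 0
for i = 1,2,3. -/
theorem M_rank_le_one_iff
    (a₁ a₂ a₃ b₁ b₂ b₃ c₁ c₂ c₃ : ℂ)
    (ha₁ : a₁ = b₁*b₃ - b₃*c₂ + c₂*c₁)
    (ha₂ : a₂ = b₂*b₁ - b₁*c₃ + c₃*c₂)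
    (ha₃ : a₃ = b₃*b₂ - b₂*c₁ + c₁*c₃)
    (M : Matrix (Fin 3) (Fin 3) ℂ)
    (hM : M = !![b₂ - c₃, -1 - b₃, 1 + c₂;
                 1 + c₃, b₃ - c₁, -1 - b₁;
                 -1 - b₂, 1 + c₁, b₁ - c₂]) :
    M.rank ≤ 1 ↔
      (a₁ + b₁ + c₁ + 1 = 0 ∧ a₂ + b₂ + c₂ + 1 = 0 ∧ a₃ + b₃ + c₃ + 1 = 0) := by
  rw [rank_le_one_iff_minors]
  subst hM ha₁ ha₂ ha₃
  constructor
  · intro h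
    have h1 := h 1 2 1 2
    have h2 := h 0 2 0 2
    have h3 := h 0 1 0 1
    simp at h1 h2 h3
    refine ⟨?_, ?_, ?_⟩
    · linear_combination h1
    · linear_combination h2
    · linear_combination h3
  · rintro ⟨h1, h2, h3⟩ i k j l
    fin_cases i <;> fin_cases k <;> fin_cases j <;> fin_cases l <;> simp <;> grind
end

section
/- Let b_i, c_i ∈ ℂ (i = 1,2,3) satisfy a_i + b_i + c_i + 1 = 0 for i = 1,2,3, where a_1 := b1·b3 − b3·c2 + c2·c1, a_2 := b2·b1 − b1·c3 + c3·c2, a_3 := b3·b2 − b2·c1 + c1·c3. Then the vectors v1 = (1+b1, 0, 1+c3), v2 = (1+c1, 1+b2, 0) and v3 = (0, 1+c2, 1+b3) in ℂ³ all lie in the kernel of M, i.e. M·v1 = M·v2 = M·v3 = 0. -/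
/-- Under aᵢ + bᵢ + cᵢ + 1 = 0 (with aᵢ given by (abc)), the vectors v₁, v₂, v₃ lie in
the kernel of M. -/
theorem v_in_kernel_M
    (a₁ a₂ a₃ b₁ b₂ b₃ c₁ c₂ c₃ : ℂ)
    (ha₁ : a₁ = b₁*b₃ - b₃*c₂ + c₂*c₁)
    (ha₂ : a₂ = b₂*b₁ - b₁*c₃ + c₃*c₂)
    (ha₃ : a₃ = b₃*b₂ - b₂*c₁ + c₁*c₃)
    (h₁ : a₁ + b₁ + c₁ + 1 = 0)
    (h₂ : a₂ + b₂ + c₂ + 1 = 0)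
    (h₃ : a₃ + b₃ + c₃ + 1 = 0)
    (M : Matrix (Fin 3) (Fin 3) ℂ)
    (hM : M = !![b₂ - c₃, -1 - b₃, 1 + c₂;
                 1 + c₃, b₃ - c₁, -1 - b₁;
                 -1 - b₂, 1 + c₁, b₁ - c₂]) :
    M.mulVec ![1 + b₁, 0, 1 + c₃] = 0 ∧
    M.mulVec ![1 + c₁, 1 + b₂, 0] = 0 ∧
    M.mulVec ![0, 1 + c₂, 1 + b₃] = 0 := by
  subst ha₁ ha₂ ha₃ hM
  refine ⟨?_, ?_, ?_⟩ <;> ext i <;> fin_cases i <;>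
    simp [Matrix.mulVec, dotProduct, Fin.sum_univ_three]
  · linear_combination h₂
  · ring
  · linear_combination -h₂
  · linear_combination -h₃
  · linear_combination h₃
  · ring
  · ring
  · linear_combination -h₁
  · linear_combination h₁
end

section
/- Let b_i, c_i ∈ ℂ (i = 1,2,3) and define a_1 := b1·b3 − b3·c2 + c2·c1, a_2 := b2·b1 − b1·c3 + c3·c2, a_3 := b3·b2 − b2·c1 + c1·c3. Then the vector w = (a1+b1+c1+1, a2+b2+c2+1, a3+b3+c3+1) ∈ ℂ³ lies in the kernel of M, i.e. M·w = 0. -/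
/-- The vector w = (aᵢ + bᵢ + cᵢ + 1)ᵢ lies in the kernel of M. -/
theorem w_in_kernel_M
    (a₁ a₂ a₃ b₁ b₂ b₃ c₁ c₂ c₃ : ℂ)
    (ha₁ : a₁ = b₁*b₃ - b₃*c₂ + c₂*c₁)
    (ha₂ : a₂ = b₂*b₁ - b₁*c₃ + c₃*c₂)
    (ha₃ : a₃ = b₃*b₂ - b₂*c₁ + c₁*c₃)
    (M : Matrix (Fin 3) (Fin 3) ℂ)
    (hM : M = !![b₂ - c₃, -1 - b₃, 1 + c₂;
                 1 + c₃, b₃ - c₁, -1 - b₁;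
                 -1 - b₂, 1 + c₁, b₁ - c₂]) :
    M.mulVec ![a₁ + b₁ + c₁ + 1, a₂ + b₂ + c₂ + 1, a₃ + b₃ + c₃ + 1] = 0 := by
  subst ha₁ ha₂ ha₃ hM
  ext i
  fin_cases i <;> simp [Matrix.mulVec, dotProduct, Fin.sum_univ_three] <;> ring
end

section
/- Let b_i, c_i ∈ ℂ (i = 1,2,3) and define a_1 := b1·b3 − b3·c2 + c2·c1, a_2 := b2·b1 − b1·c3 + c3·c2, a_3 := b3·b2 − b2·c1 + c1·c3. If rank(M) = 2, then the vector w = (a1+b1+c1+1, a2+b2+c2+1, a3+b3+c3+1) ∈ ℂ³ is nonzero and the kernel of M equals the one-dimensional span of w. -/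
theorem aux_row (K : Submodule ℂ (Fin 3 → ℂ)) (hK : Module.finrank ℂ K = 1) (x y z : ℂ)
    (h1 : ![y, -x, 0] ∈ K) (h2 : ![z, 0, -x] ∈ K) (h3 : ![0, z, -y] ∈ K) :
    x = 0 ∧ y = 0 ∧ z = 0 := by
  obtain ⟨v, hv, h⟩ := finrank_eq_one_iff'.mp hK
  obtain ⟨s, hs⟩ := h ⟨_, h1⟩
  obtain ⟨t, ht⟩ := h ⟨_, h2⟩
  obtain ⟨u, hu⟩ := h ⟨_, h3⟩
  have hs' := congrArg Subtype.val hs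
  have ht' := congrArg Subtype.val ht
  have hu' := congrArg Subtype.val hu
  have s0 := congrFun hs' 0
  have s1 := congrFun hs' 1
  have s2 := congrFun hs' 2
  have t0 := congrFun ht' 0
  have t1 := congrFun ht' 1
  have t2 := congrFun ht' 2
  have u0 := congrFun hu' 0
  have u1 := congrFun hu' 1
  have u2 := congrFun hu' 2
  simp at s0 s1 s2 t0 t1 t2 u0 u1 u2
  refine ⟨?_, ?_, ?_⟩ <;> grind

/-- If rank M = 2 then w ≠ 0 and the kernel of M is the one-dimensional span of w. -/
theorem rank_two_kernel_eq_span_w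
    (a₁ a₂ a₃ b₁ b₂ b₃ c₁ c₂ c₃ : ℂ)
    (ha₁ : a₁ = b₁*b₃ - b₃*c₂ + c₂*c₁)
    (ha₂ : a₂ = b₂*b₁ - b₁*c₃ + c₃*c₂)
    (ha₃ : a₃ = b₃*b₂ - b₂*c₁ + c₁*c₃)
    (M : Matrix (Fin 3) (Fin 3) ℂ)
    (hM : M = !![b₂ - c₃, -1 - b₃, 1 + c₂;
                 1 + c₃, b₃ - c₁, -1 - b₁;
                 -1 - b₂, 1 + c₁, b₁ - c₂])
    (hrank : M.rank = 2) :
    ![a₁ + b₁ + c₁ + 1, a₂ + b₂ + c₂ + 1, a₃ + b₃ + c₃ + 1] ≠ 0 ∧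
    LinearMap.ker M.mulVecLin =
      Submodule.span ℂ
        ({![a₁ + b₁ + c₁ + 1, a₂ + b₂ + c₂ + 1, a₃ + b₃ + c₃ + 1]} : Set (Fin 3 → ℂ)) ∧
    Module.finrank ℂ
      ↥(Submodule.span ℂ
          ({![a₁ + b₁ + c₁ + 1, a₂ + b₂ + c₂ + 1, a₃ + b₃ + c₃ + 1]} :
            Set (Fin 3 → ℂ))) = 1 := by
  have hnull : Module.finrank ℂ (LinearMap.ker M.mulVecLin) = 1 := by
    have := LinearMap.finrank_range_add_finrank_ker M.mulVecLin
    rw [Matrix.rank] at hrank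
    simp at this
    omega
  have hw : ![a₁ + b₁ + c₁ + 1, a₂ + b₂ + c₂ + 1, a₃ + b₃ + c₃ + 1] ∈
      LinearMap.ker M.mulVecLin := by
    rw [LinearMap.mem_ker, Matrix.mulVecLin_apply, hM]
    subst ha₁ ha₂ ha₃
    ext i
    fin_cases i <;> simp [Matrix.mulVec, dotProduct, Fin.sum_univ_three] <;> ring
  have hne : ![a₁ + b₁ + c₁ + 1, a₂ + b₂ + c₂ + 1, a₃ + b₃ + c₃ + 1] ≠ 0 := by
    intro h0
    have e0 := congrFun h0 0
    have e1 := congrFun h0 1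
    have e2 := congrFun h0 2
    simp at e0 e1 e2
    subst ha₁ ha₂ ha₃
    have hmem : ∀ p q r : ℂ, (b₂ - c₃) * p + (-1 - b₃) * q + (1 + c₂) * r = 0 →
        (1 + c₃) * p + (b₃ - c₁) * q + (-1 - b₁) * r = 0 →
        ![p, q, r] ∈ LinearMap.ker M.mulVecLin := by
      intro p q r h1 h2
      rw [LinearMap.mem_ker, Matrix.mulVecLin_apply, hM]
      ext i
      fin_cases i <;> simp [Matrix.mulVec, dotProduct, Fin.sum_univ_three]
      · linear_combination h1
      · linear_combination h2
      · linear_combination -h1 - h2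
    obtain ⟨x0, y0, z0⟩ := aux_row _ hnull (b₂ - c₃) (-1 - b₃) (1 + c₂)
      (hmem _ _ _ (by ring) (by linear_combination -e2))
      (hmem _ _ _ (by ring) (by linear_combination e1))
      (hmem _ _ _ (by ring) (by linear_combination -e0))
    obtain ⟨x1, y1, z1⟩ := aux_row _ hnull (1 + c₃) (b₃ - c₁) (-1 - b₁)
      (hmem _ _ _ (by linear_combination e2) (by ring))
      (hmem _ _ _ (by linear_combination -e1) (by ring))
      (hmem _ _ _ (by linear_combination e0) (by ring))
    have hM0 : M = 0 := by
      rw [hM]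
      ext i j
      fin_cases i <;> fin_cases j <;> simp
      · exact x0
      · exact y0
      · exact z0
      · exact x1
      · exact y1
      · exact z1
      · linear_combination -x0 - x1
      · linear_combination -y0 - y1
      · linear_combination -z0 - z1
    rw [hM0, Matrix.rank_zero] at hrank
    omega
  have hs := finrank_span_singleton (K := ℂ) hne
  refine ⟨hne, ?_, hs⟩
  symm
  apply Submodule.eq_of_le_of_finrank_eq
  · rw [Submodule.span_singleton_le_iff_mem]
    exact hw
  · rw [hs, hnull]
end

section
/- Let b_i, c_i ∈ ℂ and d_i ∈ ℂ (i = 1,2,3) satisfy conditions (hom), suppose rank(M) = 2, and define a_1 := b1·b3 − b3·c2 + c2·c1, a_2 := b2·b1 − b1·c3 + c3·c2, a_3 := b3·b2 − b2·c1 + c1·c3. Then there exists δ ∈ ℂ such that d_i = δ·(a_i + b_i + c_i + 1) for all i ∈ {1,2,3}. -/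
lemma par_aux (p q r x y z : ℂ) (h1 : q*z - r*y = 0) (h2 : r*x - p*z = 0) (h3 : p*y - q*x = 0) :
    ∃ s t u v w : ℂ, p = s*u ∧ q = s*v ∧ r = s*w ∧ x = t*u ∧ y = t*v ∧ z = t*w := by
  by_cases hp : p = 0
  · by_cases hq : q = 0
    · by_cases hr : r = 0
      · exact ⟨0, 1, x, y, z, by simp [hp, hq, hr]⟩
      · refine ⟨1, z/r, p, q, r, by ring, by ring, by ring, ?_, ?_, ?_⟩ <;> field_simp <;> grind
    · refine ⟨1, y/q, p, q, r, by ring, by ring, by ring, ?_, ?_, ?_⟩ <;> field_simp <;> grind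
  · refine ⟨1, x/p, p, q, r, by ring, by ring, by ring, ?_, ?_, ?_⟩ <;> field_simp <;> grind

/-- If (hom) holds and rank M = 2, then dᵢ = δ·(aᵢ + bᵢ + cᵢ + 1) for some δ. -/
theorem rank_two_d_parametrisation
    (a₁ a₂ a₃ b₁ b₂ b₃ c₁ c₂ c₃ d₁ d₂ d₃ : ℂ)
    (ha₁ : a₁ = b₁*b₃ - b₃*c₂ + c₂*c₁)
    (ha₂ : a₂ = b₂*b₁ - b₁*c₃ + c₃*c₂)
    (ha₃ : a₃ = b₃*b₂ - b₂*c₁ + c₁*c₃)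
    (hom₁ : (b₂ - c₃)*d₁ - (1 + b₃)*d₂ + (1 + c₂)*d₃ = 0)
    (hom₂ : (1 + c₃)*d₁ + (b₃ - c₁)*d₂ - (1 + b₁)*d₃ = 0)
    (hom₃ : -(1 + b₂)*d₁ + (1 + c₁)*d₂ + (b₁ - c₂)*d₃ = 0)
    (M : Matrix (Fin 3) (Fin 3) ℂ)
    (hM : M = !![b₂ - c₃, -1 - b₃, 1 + c₂;
                 1 + c₃, b₃ - c₁, -1 - b₁;
                 -1 - b₂, 1 + c₁, b₁ - c₂])
    (hrank : M.rank = 2) :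
    ∃ δ : ℂ,
      d₁ = δ*(a₁ + b₁ + c₁ + 1) ∧
      d₂ = δ*(a₂ + b₂ + c₂ + 1) ∧
      d₃ = δ*(a₃ + b₃ + c₃ + 1) := by
  obtain ⟨v₁, e1⟩ : ∃ v, v = a₁ + b₁ + c₁ + 1 := ⟨_, rfl⟩
  obtain ⟨v₂, e2⟩ : ∃ v, v = a₂ + b₂ + c₂ + 1 := ⟨_, rfl⟩
  obtain ⟨v₃, e3⟩ : ∃ v, v = a₃ + b₃ + c₃ + 1 := ⟨_, rfl⟩
  rw [← e1, ← e2, ← e3]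
  have k12 : v₁*d₂ = v₂*d₁ := by
    subst e1 e2 ha₁ ha₂
    linear_combination (-(1 + b₁))*hom₁ - (1 + c₂)*hom₂
  have k13 : v₁*d₃ = v₃*d₁ := by
    subst e1 e3 ha₁ ha₃
    linear_combination (-(b₃ - c₁))*hom₁ - (1 + b₃)*hom₂
  have k23 : v₂*d₃ = v₃*d₂ := by
    subst e2 e3 ha₂ ha₃
    linear_combination (1 + c₃)*hom₁ - (b₂ - c₃)*hom₂
  by_cases h1 : v₁ = 0
  · by_cases h2 : v₂ = 0
    · by_cases h3 : v₃ = 0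
      · exfalso
        obtain ⟨s, t, u, v, w, f1, f2, f3, f4, f5, f6⟩ :=
          par_aux (b₂ - c₃) (-1 - b₃) (1 + c₂) (1 + c₃) (b₃ - c₁) (-1 - b₁)
            (by rw [← h1, e1, ha₁]; ring) (by rw [← h2, e2, ha₂]; ring)
            (by rw [← h3, e3, ha₃]; ring)
        have hv : M = Matrix.vecMulVec ![s, t, -s - t] ![u, v, w] := by
          rw [hM]
          ext i j
          fin_cases i <;> fin_cases j <;> simp [Matrix.vecMulVec_apply]
          · exact f1
          · exact f2
          · exact f3
          · exact f4
          · exact f5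
          · exact f6
          · linear_combination -f1 - f4
          · linear_combination -f2 - f5
          · linear_combination -f3 - f6
        have := Matrix.rank_vecMulVec_le ![s, t, -s - t] ![u, v, w]
        rw [← hv, hrank] at this
        omega
      · refine ⟨d₃/v₃, ?_, ?_, ?_⟩ <;> field_simp <;> grind
    · refine ⟨d₂/v₂, ?_, ?_, ?_⟩ <;> field_simp <;> grind
  · refine ⟨d₁/v₁, ?_, ?_, ?_⟩ <;> field_simp <;> grind
end

section
/- Let p1, p2, q1, q2, r1, r2 ∈ ℂ with p2, q2, r2 pairwise distinct. Then the system (sys2) is compatible on the cube: for every choice of initial data u, ut, uh, ub ∈ ℂ, after computing uth := ((p2−q1)·ut + (p1−q2)·uh − (p1−q1)·u)/(p2−q2), uhb := ((q2−r1)·uh + (q1−r2)·ub − (q1−r1)·u)/(q2−r2), ubt := ((r2−p1)·ub + (r1−p2)·ut − (r1−p1)·u)/(r2−p2), the three values ((p2−q1)·ubt + (p1−q2)·uhb − (p1−q1)·ub)/(p2−q2), ((q2−r1)·uth + (q1−r2)·ubt − (q1−r1)·ut)/(q2−r2), ((r2−p1)·uhb + (r1−p2)·uth − (r1−p1)·uh)/(r2−p2)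 are all equal. -/
/-- The system (sys2) is compatible on the cube when p₂, q₂, r₂ are pairwise distinct. -/
theorem sys2_compatible (p₁ p₂ q₁ q₂ r₁ r₂ : ℂ)
    (hpq : p₂ ≠ q₂) (hqr : q₂ ≠ r₂) (hrp : r₂ ≠ p₂) :
    ∀ u ut uh ub : ℂ,
      (((p₂ - q₁)*(((r₂ - p₁)*ub + (r₁ - p₂)*ut - (r₁ - p₁)*u)/(r₂ - p₂))
          + (p₁ - q₂)*(((q₂ - r₁)*uh + (q₁ - r₂)*ub - (q₁ - r₁)*u)/(q₂ - r₂))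
          - (p₁ - q₁)*ub)/(p₂ - q₂)
        = ((q₂ - r₁)*(((p₂ - q₁)*ut + (p₁ - q₂)*uh - (p₁ - q₁)*u)/(p₂ - q₂))
          + (q₁ - r₂)*(((r₂ - p₁)*ub + (r₁ - p₂)*ut - (r₁ - p₁)*u)/(r₂ - p₂))
          - (q₁ - r₁)*ut)/(q₂ - r₂)) ∧
      (((q₂ - r₁)*(((p₂ - q₁)*ut + (p₁ - q₂)*uh - (p₁ - q₁)*u)/(p₂ - q₂))
          + (q₁ - r₂)*(((r₂ - p₁)*ub + (r₁ - p₂)*ut - (r₁ - p₁)*u)/(r₂ - p₂))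
          - (q₁ - r₁)*ut)/(q₂ - r₂)
        = ((r₂ - p₁)*(((q₂ - r₁)*uh + (q₁ - r₂)*ub - (q₁ - r₁)*u)/(q₂ - r₂))
          + (r₁ - p₂)*(((p₂ - q₁)*ut + (p₁ - q₂)*uh - (p₁ - q₁)*u)/(p₂ - q₂))
          - (r₁ - p₁)*uh)/(r₂ - p₂)) := by
  intro u ut uh ub
  have h1 := sub_ne_zero.mpr hpq
  have h2 := sub_ne_zero.mpr hqr
  have h3 := sub_ne_zero.mpr hrp
  constructor
  · field_simp
    ring
  · field_simp
    ring
end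

section
/- Let a, b, c ∈ ℂ∖{0} and d ∈ ℂ. Then there exist α1, α2 ∈ ℂ∖{0} and β0, β1, β2 ∈ ℂ such that, defining T(v)(n,m) := α1^n·α2^m·v(n,m) + β0 + β1·n + β2·m for functions v: ℤ² → ℂ, at least one of the following holds: (i) there exists d' ∈ ℂ such that for every v: ℤ² → ℂ, T(v) satisfies a·u + b·ũ + c·û + u~^ = d for all (n,m) ∈ ℤ² if and only if v satisfies v − ṽ − v̂ + v~^ = d' for all (n,m) ∈ ℤ²; or (ii) there exists γ ∈ ℂ∖{0} such that for every v: ℤ² → ℂ, T(v) satisfies a·u + b·ũ + c·û + u~^ = d for all (n,m) ∈ ℤ² if and only if v satisfies v − v~^ = γ·(ṽ − v̂) for all (n,m) ∈ ℤ². -/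
theorem shift_aux (a b c d : ℂ) (h : ¬ (a = 1 ∧ b = -1 ∧ c = -1)) :
    ∃ β₀ β₁ β₂ : ℂ, ∀ x y : ℂ, a * (β₀ + β₁ * x + β₂ * y) + b * (β₀ + β₁ * (x+1) + β₂ * y)
      + c * (β₀ + β₁ * x + β₂ * (y+1)) + (β₀ + β₁ * (x+1) + β₂ * (y+1)) = d := by
  by_cases hS : a + b + c + 1 = 0
  · by_cases hb : b + 1 = 0
    · by_cases hc : c + 1 = 0
      · exact absurd ⟨by linear_combination hS - hb - hc, by linear_combination hb,
          by linear_combination hc⟩ h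
      · refine ⟨0, 0, d / (c+1), fun x y => ?_⟩
        have : d / (c+1) * (c+1) = d := div_mul_cancel₀ _ hc
        linear_combination this + d / (c+1) * y * hS
    · refine ⟨0, d / (b+1), 0, fun x y => ?_⟩
      have : d / (b+1) * (b+1) = d := div_mul_cancel₀ _ hb
      linear_combination this + d / (b+1) * x * hS
  · refine ⟨d / (a+b+c+1), 0, 0, fun x y => ?_⟩
    have : d / (a+b+c+1) * (a+b+c+1) = d := div_mul_cancel₀ _ hS
    linear_combination this


/-- Every linear quadrilateral lattice equation can be brought, by a combined point and
gauge transformation T, either to the form v − ṽ − v̂ + v~^ = d' or to the form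
v − v~^ = γ(ṽ − v̂). -/
theorem linear_quad_equation_canonical_form
    (a b c : ℂ) (ha : a ≠ 0) (hb : b ≠ 0) (hc : c ≠ 0) (d : ℂ) :
    ∃ α₁ α₂ β₀ β₁ β₂ : ℂ, α₁ ≠ 0 ∧ α₂ ≠ 0 ∧
      ((∃ d' : ℂ, ∀ v : ℤ → ℤ → ℂ,
          (∀ n m : ℤ,
            a * (α₁^n * α₂^m * v n m + β₀ + β₁*n + β₂*m)
              + b * (α₁^(n+1) * α₂^m * v (n+1) m + β₀ + β₁*(n+1) + β₂*m)
              + c * (α₁^n * α₂^(m+1) * v n (m+1) + β₀ + β₁*n + β₂*(m+1))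
              + (α₁^(n+1) * α₂^(m+1) * v (n+1) (m+1) + β₀ + β₁*(n+1) + β₂*(m+1)) = d)
          ↔ (∀ n m : ℤ,
              v n m - v (n+1) m - v n (m+1) + v (n+1) (m+1) = d')) ∨
       (∃ γ : ℂ, γ ≠ 0 ∧ ∀ v : ℤ → ℤ → ℂ,
          (∀ n m : ℤ,
            a * (α₁^n * α₂^m * v n m + β₀ + β₁*n + β₂*m)
              + b * (α₁^(n+1) * α₂^m * v (n+1) m + β₀ + β₁*(n+1) + β₂*m)
              + c * (α₁^n * α₂^(m+1) * v n (m+1) + β₀ + β₁*n + β₂*(m+1))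
              + (α₁^(n+1) * α₂^(m+1) * v (n+1) (m+1) + β₀ + β₁*(n+1) + β₂*(m+1)) = d)
          ↔ (∀ n m : ℤ,
              v n m - v (n+1) (m+1) = γ * (v (n+1) m - v n (m+1))))) := by
  by_cases h : a = 1 ∧ b = -1 ∧ c = -1
  · obtain ⟨rfl, rfl, rfl⟩ := h
    refine ⟨1, 1, 0, 0, 0, one_ne_zero, one_ne_zero, Or.inl ⟨d, fun v => ?_⟩⟩
    refine forall_congr' fun n => forall_congr' fun m => ?_
    simp only [one_zpow]
    constructor <;> intro h <;> linear_combination h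
  · obtain ⟨β₀, β₁, β₂, hβ⟩ := shift_aux a b c d h
    obtain ⟨s, hs⟩ := (⟨_, (IsAlgClosed.exists_pow_nat_eq (a * b / c) two_pos).choose_spec.symm⟩ : ∃ s : ℂ, a * b / c = s ^ 2)
    have hs' : c * s ^ 2 = a * b := by rw [← hs]; field_simp
    have hs0 : s ≠ 0 := by
      rintro rfl
      exact mul_ne_zero ha hb (by linear_combination -hs')
    have h1 : b * (-(c * s / b)) = -(c * s) := by field_simp
    have h2 : -(c * s / b) * s = -a := by
      field_simp
      linear_combination -hs'
    have h3 : a * (c * s / a) = c * s := by field_simp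
    have ht0 : -(c * s / b) ≠ 0 := neg_ne_zero.2 (div_ne_zero (mul_ne_zero hc hs0) hb)
    have hγ : c * s / a ≠ 0 := div_ne_zero (mul_ne_zero hc hs0) ha
    generalize -(c * s / b) = t at *
    generalize c * s / a = γ at *
    refine ⟨t, s, β₀, β₁, β₂, ht0, hs0, Or.inr ⟨γ, hγ, fun v => ?_⟩⟩
    refine forall_congr' fun n => forall_congr' fun m => ?_
    have hA := hβ n m
    have hp : a * (t ^ n * s ^ m) ≠ 0 :=
      mul_ne_zero ha (mul_ne_zero (zpow_ne_zero _ ht0) (zpow_ne_zero _ hs0))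
    rw [zpow_add_one₀ ht0, zpow_add_one₀ hs0]
    generalize t ^ n = P at *
    generalize s ^ m = Q at *
    constructor
    · intro h
      apply mul_left_cancel₀ hp
      linear_combination h - hA - P * Q * v (n+1) m * (h1 + h3) + P * Q * v n (m+1) * h3
        - P * Q * v (n+1) (m+1) * h2
    · intro h
      linear_combination a * (P * Q) * h + hA + P * Q * v (n+1) m * (h1 + h3)
        - P * Q * v n (m+1) * h3 + P * Q * v (n+1) (m+1) * h2
end
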